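/- Let m be a real number and let u be a tempered distribution on ℝⁿ with compact support, meaning there is a compact set K ⊆ ℝⁿ such that ⟨u, φ⟩ = 0 whenever φ ∈ 𝒮(ℝⁿ) vanishes on a neighbourhood of K. Suppose that for every λ > 0 there is a Schwartz function g_λ with ⟨u, φ ∘ δ_λ⟩ − λ^m · ⟨u, φ⟩ = ∫_{ℝⁿ} g_λ(ξ) φ(ξ) dξ for all φ ∈ 𝒮(ℝⁿ). Then u is smooth away from the origin: there exists a smooth function f on ℝⁿ \ {0}, vanishing outside a compact set, such that ⟨u, φ⟩ = ∫_{ℝⁿ} f(ξ) φ(ξ) dξ for every φ ∈ 𝒮(ℝⁿ) that vanishes on a neighbourhood of 0. -/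

import Mathlib

/-!
For small `λ > 0`, the dilation `δ_λ` maps a neighbourhood of the support of `u` into any prescribed ball
around `0`. Hence if `φ` vanishes on that ball, then `φ ∘ δ_λ` vanishes near the support and
`⟨u, φ ∘ δ_λ⟩ = 0`, so the homogeneity relation reads `⟨u, φ⟩ = -λ^{-m} ∫ g_λ φ`: off the ball,
`u` is given by a Schwartz density (`exists_density_off_ball`). Each radius needs only one value
of `λ`, so no regularity of `λ ↦ g_λ` enters. By the fundamental lemma of the calculus
of variations (`eqOn_of_integral_eq`) the densities for two radii agree off the larger ball, so
they glue to a smooth function on the complement of `0`.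
-/

open scoped BigOperators

/-- Graded dilation `δ_λ` on `ℝⁿ` with integer weights `d`. -/
noncomputable def dil {n : ℕ} (d : Fin n → ℕ) (lam : ℝ) (η : Fin n → ℝ) : Fin n → ℝ :=
  fun i => lam ^ (d i) * η i

/-- The dilation by `lam ≠ 0`, as a continuous linear automorphism of `ℝⁿ`. -/
noncomputable def dilEquiv {n : ℕ} (d : Fin n → ℕ) (lam : ℝ) (h : lam ≠ 0) :
    (Fin n → ℝ) ≃L[ℝ] (Fin n → ℝ) :=
  ContinuousLinearEquiv.piCongrRight fun i =>
    ContinuousLinearEquiv.smulLeft (Units.mk0 (lam ^ d i) (pow_ne_zero _ h))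

lemma dil_mem_ball {n : ℕ} (d : Fin n → ℕ) (hd : ∀ i, 1 ≤ d i) {lam R r : ℝ} (h0 : 0 < lam)
    (h1 : lam ≤ 1) (hr : 0 < r) (hlam : lam * R ≤ r) {x : Fin n → ℝ}
    (hx : x ∈ Metric.ball (0 : Fin n → ℝ) R) : dil d lam x ∈ Metric.ball (0 : Fin n → ℝ) r := by
  rw [mem_ball_zero_iff] at hx ⊢
  rw [pi_norm_lt_iff hr]
  intro i
  have h2 : lam ^ d i ≤ lam := by
    simpa using pow_le_pow_of_le_one h0.le h1 (hd i)
  calc ‖dil d lam x i‖ = lam ^ d i * ‖x i‖ := by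
        simp [dil, abs_of_pos h0]
    _ ≤ lam * ‖x‖ := by gcongr; exact norm_le_pi_norm x i
    _ < lam * R := by gcongr
    _ ≤ r := hlam

/-- Off any ball centred at `0`, the functional `u` is integration against a Schwartz function. -/
lemma exists_density_off_ball {n : ℕ} (d : Fin n → ℕ) (hd : ∀ i, 1 ≤ d i) (m : ℝ)
    (u : SchwartzMap (Fin n → ℝ) ℂ →L[ℂ] ℂ) {R : ℝ} (hR : 0 < R)
    (hsupp : ∀ φ : SchwartzMap (Fin n → ℝ) ℂ,
      (∀ x ∈ Metric.ball (0 : Fin n → ℝ) R, φ x = 0) → u φ = 0)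
    (hhom : ∀ lam : ℝ, 0 < lam → ∃ g : SchwartzMap (Fin n → ℝ) ℂ,
      ∀ φ ψ : SchwartzMap (Fin n → ℝ) ℂ, (∀ ξ, ψ ξ = φ (dil d lam ξ)) →
        u ψ - ((lam ^ m : ℝ) : ℂ) * u φ = ∫ ξ : Fin n → ℝ, g ξ * φ ξ)
    (r : ℝ) (hr : 0 < r) :
    ∃ F : SchwartzMap (Fin n → ℝ) ℂ, ∀ φ : SchwartzMap (Fin n → ℝ) ℂ,
      (∀ x ∈ Metric.ball (0 : Fin n → ℝ) r, φ x = 0) → u φ = ∫ ξ, F ξ * φ ξ := by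
  have h0 : 0 < min 1 (r / R) := lt_min one_pos (div_pos hr hR)
  have hle : min 1 (r / R) * R ≤ r := (le_div_iff₀ hR).1 (min_le_right _ _)
  have h1 : min 1 (r / R) ≤ 1 := min_le_left _ _
  generalize min 1 (r / R) = lam at h0 hle h1
  obtain ⟨g, hg⟩ := hhom lam h0
  refine ⟨(-((lam ^ m : ℝ) : ℂ)⁻¹) • g, fun φ hφ => ?_⟩
  have key := hg φ (SchwartzMap.compCLMOfContinuousLinearEquiv ℂ (dilEquiv d lam h0.ne') φ)
    (fun ξ => rfl)
  rw [hsupp (SchwartzMap.compCLMOfContinuousLinearEquiv ℂ (dilEquiv d lam h0.ne') φ)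
    fun x hx => hφ (dil d lam x) (dil_mem_ball d hd h0 h1 hr hle hx)] at key
  have hm : ((lam ^ m : ℝ) : ℂ) ≠ 0 := by
    exact_mod_cast (Real.rpow_pos_of_pos h0 m).ne'
  simp only [smul_apply, smul_eq_mul, mul_assoc]
  rw [MeasureTheory.integral_const_mul, ← key]
  field_simp
  ring

/-- Schwartz functions that induce the same functional on test functions supported in an
open set agree on that set. -/
lemma eqOn_of_integral_eq {n : ℕ} {V : Set (Fin n → ℝ)} (hV : IsOpen V)
    (F G : SchwartzMap (Fin n → ℝ) ℂ)
    (h : ∀ φ : SchwartzMap (Fin n → ℝ) ℂ, (∀ x ∉ V, φ x = 0) →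
      ∫ ξ, F ξ * φ ξ = ∫ ξ, G ξ * φ ξ) : Set.EqOn F G V := by
  have hae : ∀ᵐ x ∂(MeasureTheory.volume : MeasureTheory.Measure (Fin n → ℝ)),
      x ∈ V → (F - G) x = 0 := by
    refine hV.ae_eq_zero_of_integral_contDiff_smul_eq_zero
      ((F - G).continuous.locallyIntegrable.locallyIntegrableOn V) fun g hg hc hs => ?_
    have hc' : HasCompactSupport fun x => (g x : ℂ) :=
      hc.comp_left (g := fun t : ℝ => (t : ℂ)) (by simp)
    have hg' : ContDiff ℝ (⊤ : ℕ∞) fun x => (g x : ℂ) := Complex.ofRealCLM.contDiff.comp hg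
    have key := h (hc'.toSchwartzMap hg') fun x hx => by
      have : g x = 0 := image_eq_zero_of_notMem_tsupport fun hx' => hx (hs hx')
      change (g x : ℂ) = 0
      simp [this]
    have hint : ∀ H : SchwartzMap (Fin n → ℝ) ℂ,
        MeasureTheory.Integrable fun x => H x * (g x : ℂ) := fun H =>
      (H.continuous.mul hg'.continuous).integrable_of_hasCompactSupport hc'.mul_left
    change ∫ ξ, F ξ * (g ξ : ℂ) = ∫ ξ, G ξ * (g ξ : ℂ) at key
    rw [← sub_eq_zero, ← MeasureTheory.integral_sub (hint F) (hint G)] at key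
    rw [← key]
    congr 1 with x
    simp only [Complex.real_smul, sub_apply]
    ring
  refine MeasureTheory.Measure.eqOn_open_of_ae_eq (μ := MeasureTheory.volume) ?_ hV
    F.continuous.continuousOn G.continuous.continuousOn
  refine (MeasureTheory.ae_restrict_iff' hV.measurableSet).2 ?_
  filter_upwards [hae] with x hx hxV
  exact sub_eq_zero.1 (hx hxV)

theorem stmt6 {n : ℕ} (d : Fin n → ℕ) (hd : ∀ i, 1 ≤ d i) (m : ℝ)
    (u : SchwartzMap (Fin n → ℝ) ℂ →L[ℂ] ℂ)
    (hsupp : ∃ K : Set (Fin n → ℝ), IsCompact K ∧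
      ∀ φ : SchwartzMap (Fin n → ℝ) ℂ,
        (∃ U : Set (Fin n → ℝ), IsOpen U ∧ K ⊆ U ∧ ∀ x ∈ U, φ x = 0) → u φ = 0)
    (hhom : ∀ lam : ℝ, 0 < lam → ∃ g : SchwartzMap (Fin n → ℝ) ℂ,
      ∀ φ ψ : SchwartzMap (Fin n → ℝ) ℂ, (∀ ξ, ψ ξ = φ (dil d lam ξ)) →
        u ψ - ((lam ^ m : ℝ) : ℂ) * u φ = ∫ ξ : Fin n → ℝ, g ξ * φ ξ) :
    ∃ f : (Fin n → ℝ) → ℂ,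
      ContDiffOn ℝ (⊤ : ℕ∞) f {(0 : Fin n → ℝ)}ᶜ ∧
      (∃ K : Set (Fin n → ℝ), IsCompact K ∧ ∀ ξ ∉ K, f ξ = 0) ∧
      ∀ φ : SchwartzMap (Fin n → ℝ) ℂ,
        (∃ U ∈ nhds (0 : Fin n → ℝ), ∀ x ∈ U, φ x = 0) →
        u φ = ∫ ξ : Fin n → ℝ, f ξ * φ ξ := by
  obtain ⟨K, hK, hKu⟩ := hsupp
  obtain ⟨R, hR, hKR⟩ : ∃ R : ℝ, 0 < R ∧ K ⊆ Metric.ball (0 : Fin n → ℝ) R :=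
    hK.isBounded.subset_ball_lt 0 0
  have hu : ∀ φ : SchwartzMap (Fin n → ℝ) ℂ,
      (∀ x ∈ Metric.ball (0 : Fin n → ℝ) R, φ x = 0) → u φ = 0 :=
    fun φ hφ => hKu φ ⟨_, Metric.isOpen_ball, hKR, hφ⟩
  choose! F hF using exists_density_off_ball d hd m u hR hu hhom
  have hopen : ∀ r : ℝ, IsOpen {x : Fin n → ℝ | r < ‖x‖} :=
    fun r => isOpen_lt continuous_const continuous_norm
  have hagree : ∀ r s : ℝ, 0 < r → 0 < s → ∀ x : Fin n → ℝ, r < ‖x‖ → s < ‖x‖ →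
      F r x = F s x := by
    intro r s hr hs x hrx hsx
    refine eqOn_of_integral_eq (hopen (max r s)) (F r) (F s) (fun φ hφ => ?_)
      (show max r s < ‖x‖ from max_lt hrx hsx)
    rw [← hF r hr φ, ← hF s hs φ]
    · intro y hy
      exact hφ y (not_lt.2 ((mem_ball_zero_iff.1 hy).le.trans (le_max_right _ _)))
    · intro y hy
      exact hφ y (not_lt.2 ((mem_ball_zero_iff.1 hy).le.trans (le_max_left _ _)))
  have hglue : ∀ r : ℝ, 0 < r → ∀ x : Fin n → ℝ, r < ‖x‖ → F (‖x‖ / 2) x = F r x :=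
    fun r hr x hx => hagree _ _ (half_pos (hr.trans hx)) hr x (half_lt_self (hr.trans hx)) hx
  refine ⟨fun x => F (‖x‖ / 2) x, fun x hx => ?_,
    ⟨Metric.closedBall 0 R, isCompact_closedBall _ _, fun x hx => ?_⟩, ?_⟩
  · have hx0 : 0 < ‖x‖ := norm_pos_iff.2 hx
    refine (((F (‖x‖ / 2)).smooth _).contDiffAt.congr_of_eventuallyEq ?_).contDiffWithinAt
    filter_upwards [(hopen (‖x‖ / 2)).mem_nhds (half_lt_self hx0)] with y hy
    exact hglue _ (half_pos hx0) y hy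
  · have hx' : R < ‖x‖ := by simpa using hx
    refine (hglue R hR x hx').trans ?_
    -- On test functions vanishing on the ball of radius `R`, `u` is zero, so its density is too.
    refine eqOn_of_integral_eq (hopen R) (F R) 0 (fun φ hφ => ?_) hx'
    have hφ' : ∀ y ∈ Metric.ball (0 : Fin n → ℝ) R, φ y = 0 :=
      fun y hy => hφ y (not_lt.2 (mem_ball_zero_iff.1 hy).le)
    rw [← hF R hR φ hφ', hu φ hφ']
    simp
  · rintro φ ⟨U, hU, hφ⟩
    obtain ⟨r, hr, hrU⟩ := Metric.mem_nhds_iff.1 hU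
    -- With half the radius, `‖x‖ > r / 2` is strict even on the sphere `‖x‖ = r`.
    rw [hF (r / 2) (half_pos hr) φ fun x hx =>
      hφ x (hrU (Metric.ball_subset_ball (half_le_self hr.le) hx))]
    congr 1 with x
    by_cases hx : x ∈ Metric.ball (0 : Fin n → ℝ) r
    · simp [hφ x (hrU hx)]
    · have hx' : r ≤ ‖x‖ := by simpa using hx
      exact congrArg (· * φ x)
        (hglue (r / 2) (half_pos hr) x ((half_lt_self hr).trans_le hx')).symm
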